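/- arXiv:2308.06364 — 2 statements merged into one kernel-verified Lean document; each statement's English description precedes it below -/
import Mathlib

section
/- Let N be a positive integer with base-φ representation given by the finite set S of integers (so S contains no two consecutive integers and N = Σ_{i∈S} φ^i). Assume S contains at least one positive element, and let i be the smallest positive element of S. If i is even, then N = Σ_{k∈S, k<0} (−1)^{|k|} L_{|k|} + d_0 (equivalently, N = Σ_{k∈S, k<0} L_k + d_0, with Lucas numbers extended to negative indices by L_{−n} = (−1)^n L_n). -/
/-- The golden ratio φ = (1+√5)/2. -/
noncomputable def goldenPhi : ℝ := (1 + Real.sqrt 5) / 2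

/-- The algebraic conjugate φ̄ = (1−√5)/2. -/
noncomputable def goldenPhiBar : ℝ := (1 - Real.sqrt 5) / 2

/-- Lucas numbers extended to all integer indices: L n = φ^n + φ̄^n. -/
noncomputable def LucasR (n : ℤ) : ℝ := goldenPhi ^ n + goldenPhiBar ^ n

/-!
Write `φ`, `ψ` for the golden ratio and its conjugate, and split the sums of `φ ^ k` and `ψ ^ k`
over `S` into the parts `A`, `A'` with `0 < k` and `B`, `B'` with `k < 0`. Since `φ` is irrational,
conjugation in `ℤ[φ]` turns `N = A + d₀ + B` into `N = A' + d₀ + B'`, while the Lucas sum is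
`B + B'`. Hence the two sides of the claim differ by `A' - B`, which is an integer because Lucas
numbers are. It vanishes because it lies strictly between `-1` and `1`: powers of `φ` with
non-consecutive exponents below `m` sum to less than `φ ^ (m - 1) + φ ^ (m - 3) + ⋯ = φ ^ m`.
This gives `0 ≤ B < 1`, and also shows that the leading term `ψ ^ i = φ ^ (-i) > 0` of `A'`
dominates the others, so `0 < A' < φ ^ (1 - i) ≤ 1`.
-/

open scoped goldenRatio Pointwise

section FibonacciPowers

variable {K : Type*} [Field K] {x : K}

lemma zpow_eq_intFib_mul_add_intFib_sub_one (hx : x ^ 2 = x + 1) (k : ℤ) :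
    x ^ k = Int.fib k * x + Int.fib (k - 1) := by
  have hx0 : x ≠ 0 := by rintro rfl; simp at hx
  have hinv : x⁻¹ = x - 1 := inv_eq_of_mul_eq_one_right (by linear_combination hx)
  induction k with
  | zero => simp
  | succ n ih =>
    have hfib : Int.fib (n + 1) = Int.fib (n - 1) + Int.fib n := by
      simpa [sub_add] using Int.fib_add_two (n - 1)
    rw [zpow_add_one₀ hx0, ih, hfib, add_sub_cancel_right]
    push_cast
    linear_combination (Int.fib n : K) * hx
  | pred n ih =>
    have hfib : Int.fib (-n) = Int.fib (-n - 1 - 1) + Int.fib (-n - 1) := by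
      simpa [sub_add] using Int.fib_add_two (-n - 1 - 1)
    rw [zpow_sub_one₀ hx0, ih, hinv, hfib]
    push_cast
    linear_combination (Int.fib (-n - 1 - 1) + Int.fib (-n - 1) : K) * hx

lemma sum_zpow_eq_sum_intFib_mul_add (hx : x ^ 2 = x + 1) (S : Finset ℤ) :
    ∑ k ∈ S, x ^ k = (∑ k ∈ S, Int.fib k : ℤ) * x + (∑ k ∈ S, Int.fib (k - 1) : ℤ) := by
  push_cast
  rw [Finset.sum_mul, ← Finset.sum_add_distrib]
  exact Finset.sum_congr rfl fun k _ => zpow_eq_intFib_mul_add_intFib_sub_one hx k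

end FibonacciPowers

lemma sum_goldenConj_zpow_eq_of_sum_goldenRatio_zpow_eq {S : Finset ℤ} {q : ℚ}
    (hq : ∑ k ∈ S, φ ^ k = q) : ∑ k ∈ S, ψ ^ k = q := by
  rw [sum_zpow_eq_sum_intFib_mul_add Real.goldenRatio_sq] at hq
  have hfib : ∑ k ∈ S, Int.fib k = 0 := by
    by_contra hne
    exact ((Real.goldenRatio_irrational.intCast_mul hne).add_intCast _).ne_rat q hq
  rw [sum_zpow_eq_sum_intFib_mul_add Real.goldenConj_sq]
  simpa [hfib] using hq

lemma goldenPhi_eq_goldenRatio : goldenPhi = φ := rfl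

lemma goldenPhiBar_eq_goldenConj : goldenPhiBar = ψ := rfl

lemma lucasR_eq_goldenRatio_zpow_add_goldenConj_zpow (k : ℤ) : LucasR k = φ ^ k + ψ ^ k := by
  rw [LucasR, goldenPhi_eq_goldenRatio, goldenPhiBar_eq_goldenConj]

lemma lucasR_eq_intFib_add_two_mul_intFib_sub_one (k : ℤ) :
    LucasR k = (Int.fib k + 2 * Int.fib (k - 1) : ℤ) := by
  rw [lucasR_eq_goldenRatio_zpow_add_goldenConj_zpow,
    zpow_eq_intFib_mul_add_intFib_sub_one Real.goldenRatio_sq,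
    zpow_eq_intFib_mul_add_intFib_sub_one Real.goldenConj_sq]
  push_cast
  linear_combination (Int.fib k : ℝ) * Real.goldenRatio_add_goldenConj

lemma lucasR_neg_natCast (n : ℕ) : LucasR (-n) = (-1) ^ n * LucasR n := by
  simp only [lucasR_eq_goldenRatio_zpow_add_goldenConj_zpow, zpow_neg, zpow_natCast, ← inv_pow,
    Real.inv_goldenRatio, Real.inv_goldenConj, neg_pow ψ, neg_pow φ]
  ring

lemma neg_one_pow_natAbs_mul_lucasR_natAbs {k : ℤ} (hk : k ≤ 0) :
    (-1) ^ k.natAbs * LucasR k.natAbs = LucasR k := by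
  rw [← lucasR_neg_natCast, Int.ofNat_natAbs_of_nonpos hk, neg_neg]

lemma sum_eq_sum_filter_lt_add_sum_filter_gt_add_ite {ι M : Type*} [LinearOrder ι]
    [AddCommMonoid M] (S : Finset ι) (f : ι → M) (a : ι) :
    ∑ k ∈ S, f k =
      ∑ k ∈ S with k < a, f k + ∑ k ∈ S with a < k, f k + if a ∈ S then f a else 0 := by
  rw [← Finset.sum_ite_eq' S a f, Finset.sum_filter, Finset.sum_filter, ← Finset.sum_add_distrib,
    ← Finset.sum_add_distrib]
  refine Finset.sum_congr rfl fun k _ => ?_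
  rcases lt_trichotomy k a with h | h | h
  · simp [h, h.ne, h.not_gt]
  · simp [h]
  · simp [h, h.ne', h.not_gt]

lemma sum_goldenConj_zpow_sub_sum_lucasR (S : Finset ℤ) :
    ∑ k ∈ S, ψ ^ k - (∑ k ∈ S with k < 0, LucasR k + if (0 : ℤ) ∈ S then 1 else 0) =
      ∑ k ∈ S with 0 < k, ψ ^ k - ∑ k ∈ S with k < 0, φ ^ k := by
  rw [sum_eq_sum_filter_lt_add_sum_filter_gt_add_ite S (fun k : ℤ => ψ ^ k) 0]
  simp only [lucasR_eq_goldenRatio_zpow_add_goldenConj_zpow, Finset.sum_add_distrib, zpow_zero]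
  ring

lemma goldenRatio_zpow_add_zpow_sub_one (k : ℤ) : φ ^ k + φ ^ (k - 1) = φ ^ (k + 1) := by
  rw [zpow_sub_one₀ Real.goldenRatio_ne_zero, zpow_add_one₀ Real.goldenRatio_ne_zero,
    Real.inv_goldenRatio, ← Real.one_sub_goldenConj]
  ring

lemma abs_goldenConj_zpow (k : ℤ) : |ψ ^ k| = φ ^ (-k) := by
  rw [abs_zpow, abs_of_neg Real.goldenConj_neg, ← Real.inv_goldenRatio, inv_zpow']

/-- The digit condition of a base-`φ` representation: the set of exponents contains no two
consecutive integers. -/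
def NonConsecutive (S : Finset ℤ) : Prop := ∀ k ∈ S, k + 1 ∉ S

namespace NonConsecutive

variable {S T : Finset ℤ} {i m : ℤ}

lemma mono (hT : NonConsecutive T) (hST : S ⊆ T) : NonConsecutive S :=
  fun k hk hk' => hT k (hST hk) (hST hk')

lemma neg (hS : NonConsecutive S) : NonConsecutive (-S) := by
  intro k hk hk'
  rw [Finset.mem_neg'] at hk hk'
  exact hS _ hk' (by simpa using hk)

lemma add_one_lt_of_lt (hS : NonConsecutive S) {j k : ℤ} (hj : j ∈ S) (hk : k ∈ S) (hjk : j < k) :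
    j + 1 < k :=
  (Int.add_one_le_of_lt hjk).lt_of_ne fun h => hS j hj (h ▸ hk)

lemma sum_goldenRatio_zpow_lt (hS : NonConsecutive S) (hm : ∀ k ∈ S, k < m) :
    ∑ k ∈ S, φ ^ k < φ ^ m := by
  induction S using Finset.induction_on_max generalizing m with
  | empty => simpa using zpow_pos Real.goldenRatio_pos m
  | insert a S ha ih =>
    have hlt : ∀ k ∈ S, k < a - 1 := fun k hk =>
      lt_sub_iff_add_lt.2 <|
        hS.add_one_lt_of_lt (S.mem_insert_of_mem hk) (S.mem_insert_self a) (ha k hk)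
    rw [Finset.sum_insert fun h => (ha a h).false]
    calc φ ^ a + ∑ k ∈ S, φ ^ k
      _ < φ ^ a + φ ^ (a - 1) := by gcongr; exact ih (hS.mono (S.subset_insert a)) hlt
      _ = φ ^ (a + 1) := goldenRatio_zpow_add_zpow_sub_one a
      _ ≤ φ ^ m := zpow_le_zpow_right₀ Real.one_lt_goldenRatio.le (hm a (S.mem_insert_self a))

lemma abs_sum_goldenConj_zpow_lt (hS : NonConsecutive S) (hm : ∀ k ∈ S, m < k) :
    |∑ k ∈ S, ψ ^ k| < φ ^ (-m) := by
  calc |∑ k ∈ S, ψ ^ k|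
    _ ≤ ∑ k ∈ S, |ψ ^ k| := Finset.abs_sum_le_sum_abs _ _
    _ = ∑ k ∈ -S, φ ^ k := by simp only [Finset.sum_neg_index, abs_goldenConj_zpow]
    _ < φ ^ (-m) := hS.neg.sum_goldenRatio_zpow_lt fun k hk =>
      lt_neg.1 (hm _ (Finset.mem_neg'.1 hk))

lemma sum_goldenConj_zpow_mem_Ioo (hS : NonConsecutive S) (hi : IsLeast (S : Set ℤ) i)
    (heven : Even i) : ∑ k ∈ S, ψ ^ k ∈ Set.Ioo 0 (φ ^ (-i + 1)) := by
  have hlead : ψ ^ i = φ ^ (-i) := by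
    rw [← abs_goldenConj_zpow, abs_of_pos (heven.zpow_pos Real.goldenConj_ne_zero)]
  have htail : |∑ k ∈ S.erase i, ψ ^ k| < φ ^ (-i - 1) := by
    rw [← neg_add']
    refine (hS.mono (S.erase_subset i)).abs_sum_goldenConj_zpow_lt fun k hk => ?_
    obtain ⟨hne, hkS⟩ := Finset.mem_erase.1 hk
    exact hS.add_one_lt_of_lt hi.1 hkS ((hi.2 hkS).lt_of_ne' hne)
  have htail_lt_lead : φ ^ (-i - 1) < φ ^ (-i) :=
    zpow_lt_zpow_right₀ Real.one_lt_goldenRatio (sub_one_lt _)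
  rw [← Finset.add_sum_erase S _ hi.1, hlead, ← goldenRatio_zpow_add_zpow_sub_one]
  obtain ⟨hlower, hupper⟩ := abs_lt.1 htail
  constructor <;> linarith

lemma abs_sum_goldenConj_zpow_sub_sum_goldenRatio_zpow_lt_one (hS : NonConsecutive S)
    (hi : IsLeast {k | k ∈ S ∧ 0 < k} i) (heven : Even i) :
    |∑ k ∈ S with 0 < k, ψ ^ k - ∑ k ∈ S with k < 0, φ ^ k| < 1 := by
  obtain ⟨hpos, hpos_lt⟩ := (hS.mono (S.filter_subset (0 < ·))).sum_goldenConj_zpow_mem_Ioo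
    (i := i) (by simpa using hi) heven
  have hle_one : φ ^ (-i + 1) ≤ 1 :=
    zpow_le_one_of_nonpos₀ Real.one_lt_goldenRatio.le (by have := hi.1.2; lia)
  have hneg : 0 ≤ ∑ k ∈ S with k < 0, φ ^ k :=
    Finset.sum_nonneg fun k _ => zpow_nonneg Real.goldenRatio_pos.le k
  have hneg_lt : ∑ k ∈ S with k < 0, φ ^ k < 1 := by
    simpa using (hS.mono (S.filter_subset (· < 0))).sum_goldenRatio_zpow_lt (m := 0)
      fun k hk => (Finset.mem_filter.1 hk).2
  rw [abs_lt]
  constructor <;> linarith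

end NonConsecutive

/-- Theorem 2 (even case): if the smallest positive index `i` in the base-φ
representation `S` of `N` is even, then `N = Σ_{k∈S, k<0} (−1)^{|k|} L_{|k|} + d_0`. -/
theorem stmt_3 (N : ℕ) (hN : 0 < N) (S : Finset ℤ)
    (hnc : ∀ k ∈ S, k + 1 ∉ S)
    (hrep : (N : ℝ) = ∑ k ∈ S, goldenPhi ^ k)
    (i : ℤ) (hiS : i ∈ S) (hipos : 0 < i)
    (hmin : ∀ j ∈ S, 0 < j → i ≤ j)
    (heven : Even i) :
    (N : ℝ) = (∑ k ∈ S.filter (fun k => k < 0),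
        (-1 : ℝ) ^ (k.natAbs) * LucasR (k.natAbs)) +
      (if (0 : ℤ) ∈ S then 1 else 0) := by
  rw [goldenPhi_eq_goldenRatio] at hrep
  have hconj : ∑ k ∈ S, ψ ^ k = N := by
    simpa using sum_goldenConj_zpow_eq_of_sum_goldenRatio_zpow_eq (q := N)
      (by simpa using hrep.symm)
  have hlucas : ∑ k ∈ S with k < 0, (-1 : ℝ) ^ k.natAbs * LucasR k.natAbs =
      ∑ k ∈ S with k < 0, LucasR k :=
    Finset.sum_congr rfl fun k hk =>
      neg_one_pow_natAbs_mul_lucasR_natAbs (Finset.mem_filter.1 hk).2.le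
  have hlt := NonConsecutive.abs_sum_goldenConj_zpow_sub_sum_goldenRatio_zpow_lt_one hnc
    ⟨⟨hiS, hipos⟩, fun j hj => hmin j hj.1 hj.2⟩ heven
  rw [← sum_goldenConj_zpow_sub_sum_lucasR, hconj] at hlt
  obtain ⟨n, hn⟩ : ∃ n : ℤ,
      (N : ℝ) - (∑ k ∈ S with k < 0, LucasR k + if (0 : ℤ) ∈ S then 1 else 0) = n :=
    ⟨N - (∑ k ∈ S with k < 0, (Int.fib k + 2 * Int.fib (k - 1)) + if 0 ∈ S then 1 else 0),
      by simp [lucasR_eq_intFib_add_two_mul_intFib_sub_one]⟩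
  have hn_zero : n = 0 := Int.abs_lt_one_iff.1 (by rw [hn] at hlt; exact_mod_cast hlt)
  rw [hlucas, ← sub_eq_zero, hn, hn_zero, Int.cast_zero]
end

section
/- Let k_1 > k_2 > ⋯ > k_s be integers (s ≥ 1) such that k_j − k_{j+1} ≥ 2 for all 1 ≤ j ≤ s−1. If k_1 is even, then (−1)^{k_1} φ^{k_1} + (−1)^{k_2} φ^{k_2} + ⋯ + (−1)^{k_s} φ^{k_s} > 0. -/
/-! A base `x > 0` with `x + 1 ≤ x ^ 2` satisfies `x ^ n + x ^ (n - 1) ≤ x ^ (n + 1)`, so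
`x ^ n + x ^ (n - 2) + x ^ (n - 4) + ⋯` never exceeds `x ^ (n + 1)`. Hence the terms after
`x ^ (k 0)`, whose exponents are at most `k 0 - 2` and at least `2` apart, add up to less than
`x ^ (k 0 - 1)` in absolute value whatever their signs, and the leading term decides the sign. -/

section Base

variable {K : Type*} [Field K] [LinearOrder K] [IsStrictOrderedRing K] {x : K}

lemma one_lt_of_add_one_le_sq (hx : 0 < x) (hsq : x + 1 ≤ x ^ 2) : 1 < x := by
  nlinarith

lemma zpow_add_zpow_sub_one_le (hx : 0 < x) (hsq : x + 1 ≤ x ^ 2) (n : ℤ) :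
    x ^ n + x ^ (n - 1) ≤ x ^ (n + 1) :=
  calc x ^ n + x ^ (n - 1) = x ^ (n - 1) * (x + 1) := by
        rw [zpow_sub_one₀ hx.ne']; field_simp
    _ ≤ x ^ (n - 1) * x ^ 2 := by gcongr
    _ = x ^ (n + 1) := by
        rw [← zpow_natCast x 2, ← zpow_add₀ hx.ne']; congr 1; push_cast; ring

lemma abs_sum_mul_zpow_succ_lt (hx : 0 < x) (hsq : x + 1 ≤ x ^ 2) (s : ℕ) (c : ℕ → K)
    (k : ℕ → ℤ) (hc : ∀ j < s, |c j| ≤ 1) (hgap : ∀ j < s, 2 ≤ k j - k (j + 1)) :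
    |∑ j ∈ Finset.range s, c j * x ^ k (j + 1)| < x ^ (k 0 - 1) := by
  induction s generalizing c k with
  | zero => simpa using zpow_pos hx (k 0 - 1)
  | succ s ih =>
    have head_le : |c 0 * x ^ k 1| ≤ x ^ k 1 := by
      rw [abs_mul, abs_of_pos (zpow_pos hx _)]
      exact mul_le_of_le_one_left (zpow_pos hx _).le (hc 0 s.succ_pos)
    have tail_lt : |∑ j ∈ Finset.range s, c (j + 1) * x ^ k (j + 1 + 1)| < x ^ (k 1 - 1) :=
      ih (fun j => c (j + 1)) (fun j => k (j + 1)) (fun j hj => hc (j + 1) (by omega))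
        (fun j hj => hgap (j + 1) (by omega))
    have first_gap : 2 ≤ k 0 - k 1 := hgap 0 s.succ_pos
    rw [Finset.sum_range_succ']
    calc |∑ j ∈ Finset.range s, c (j + 1) * x ^ k (j + 1 + 1) + c 0 * x ^ k 1|
        ≤ |∑ j ∈ Finset.range s, c (j + 1) * x ^ k (j + 1 + 1)| + |c 0 * x ^ k 1| :=
          abs_add_le _ _
      _ < x ^ k 1 + x ^ (k 1 - 1) := by linarith
      _ ≤ x ^ (k 1 + 1) := zpow_add_zpow_sub_one_le hx hsq _
      _ ≤ x ^ (k 0 - 1) :=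
          zpow_le_zpow_right₀ (one_lt_of_add_one_le_sq hx hsq).le (by omega)

theorem stmt_9_general (hx : 0 < x) (hsq : x + 1 ≤ x ^ 2) (s : ℕ) (hs : 1 ≤ s) (c : ℕ → K)
    (k : ℕ → ℤ) (hgap : ∀ j, j + 1 < s → 2 ≤ k j - k (j + 1)) (hc₀ : 1 ≤ c 0)
    (hc : ∀ j, j + 1 < s → |c (j + 1)| ≤ 1) :
    0 < ∑ j ∈ Finset.range s, c j * x ^ k j := by
  obtain ⟨s, rfl⟩ := Nat.exists_eq_add_of_le' hs
  have tail_lt : |∑ j ∈ Finset.range s, c (j + 1) * x ^ k (j + 1)| < x ^ (k 0 - 1) :=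
    abs_sum_mul_zpow_succ_lt hx hsq s (fun j => c (j + 1)) k (fun j hj => hc j (by omega))
      (fun j hj => hgap j (by omega))
  have lt_head : x ^ (k 0 - 1) < c 0 * x ^ k 0 :=
    (zpow_lt_zpow_right₀ (one_lt_of_add_one_le_sq hx hsq) (sub_one_lt _)).trans_le
      (le_mul_of_one_le_left (zpow_pos hx _).le hc₀)
  rw [Finset.sum_range_succ']
  linarith [neg_lt_of_abs_lt tail_lt]

end Base

/-- Lemma 2 (even case): for integers `k 0 > k 1 > ⋯ > k (s-1)` with consecutive
gaps at least 2 and `k 0` even, `(−1)^{k_1} φ^{k_1} + ⋯ + (−1)^{k_s} φ^{k_s} > 0`. -/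
theorem stmt_9 (s : ℕ) (hs : 1 ≤ s) (k : ℕ → ℤ)
    (hgap : ∀ j, j + 1 < s → k j - k (j + 1) ≥ 2)
    (heven : Even (k 0)) :
    0 < ∑ j ∈ Finset.range s, (-1 : ℝ) ^ (k j) * goldenPhi ^ (k j) :=
  stmt_9_general Real.goldenRatio_pos Real.goldenRatio_sq.ge s hs (fun j => (-1) ^ k j) k hgap
    heven.neg_one_zpow.ge (fun j _ => by simp [abs_zpow])
end
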